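/- On (ℝ × ℤ)³ × U(1) call a pair x = (r₁,n₁,s₁,m₁,t₁,k₁,z₁), y = (r₂,n₂,s₂,m₂,t₂,k₂,z₂) composable if r₂ = r₁+n₁, s₂ = s₁+m₁ and t₂ = t₁+k₁, and for composable pairs define the product x·y := (r₁, n₁+n₂, s₁, m₁+m₂, t₁, k₁+k₂, z₁·z₂·e(t₁·n₁·m₂)). Then for any x, y, w such that x,y are composable and y,w are composable (so that x·y,w and x,y·w are also composable), one has (x·y)·w = x·(y·w). (This is the associativity of the bundle gerbe product of the triple cup-product bundle gerbe f ∪ g ∪ h over the 3-torus; the key point is that e((t₂−t₁)·n₂·m₃) = 1 since t₂ − t₁ = k₁ and n₂, m₃ are integers.) -/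

import Mathlib

/-!
The `U(1)`-components of `(x·y)·w` and `x·(y·w)` are `z₁z₂z₃` times, respectively,
`e(t₁n₁m₂ + t₁(n₁+n₂)m₃)` and `e(t₂n₂m₃ + t₁n₁(m₂+m₃))`, whose arguments differ by
`(t₂ - t₁)n₂m₃ = k₁n₂m₃`, an integer; and `e` is a homomorphism that kills integers.
-/

/-- The standard character `e(t) = exp(2πi·t)` of `ℝ` with values in `U(1)`. -/
noncomputable def eChar (t : ℝ) : Circle := Circle.exp (2 * Real.pi * t)

/-- A point of the total space of the triple cup-product bundle gerbe: an element of
`(ℝ × ℤ)³ × U(1)`, i.e. `(r, n, s, m, t, k, z)` with `r, s, t : ℝ`, `n, m, k : ℤ`,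
`z ∈ U(1)`. -/
structure TripleCupPt where
  r : ℝ
  n : ℤ
  s : ℝ
  m : ℤ
  t : ℝ
  k : ℤ
  z : Circle

/-- Composability: `(x, y)` is composable iff `y.r = x.r + x.n`, `y.s = x.s + x.m`,
`y.t = x.t + x.k`. -/
def TripleCupPt.Composable (x y : TripleCupPt) : Prop :=
  y.r = x.r + x.n ∧ y.s = x.s + x.m ∧ y.t = x.t + x.k

/-- The bundle gerbe product of the triple cup-product bundle gerbe:
`x·y = (r₁, n₁+n₂, s₁, m₁+m₂, t₁, k₁+k₂, z₁·z₂·e(t₁·n₁·m₂))`. -/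
noncomputable def TripleCupPt.prod (x y : TripleCupPt) : TripleCupPt :=
  ⟨x.r, x.n + y.n, x.s, x.m + y.m, x.t, x.k + y.k,
    x.z * y.z * eChar (x.t * x.n * y.m)⟩

theorem eChar_add (a b : ℝ) : eChar (a + b) = eChar a * eChar b := by
  simp only [eChar, mul_add, Circle.exp_add]

theorem eChar_intCast (j : ℤ) : eChar (j : ℝ) = 1 :=
  Circle.exp_eq_one.mpr ⟨j, mul_comm _ _⟩

/-- The bundle gerbe product of the triple cup-product bundle gerbe
`f ∪ g ∪ h` is associative: if `(x, y)` and `(y, w)` are composable, then so are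
`(x·y, w)` and `(x, y·w)`, and `(x·y)·w = x·(y·w)`. -/
theorem triple_cup_product_assoc (x y w : TripleCupPt)
    (hxy : x.Composable y) (hyw : y.Composable w) :
    (x.prod y).Composable w ∧ x.Composable (y.prod w) ∧
    (x.prod y).prod w = x.prod (y.prod w) := by
  obtain ⟨hr, hs, ht⟩ := hxy
  obtain ⟨hr', hs', ht'⟩ := hyw
  have key : eChar (x.t * x.n * y.m) * eChar (x.t * ((x.n + y.n : ℤ) : ℝ) * w.m)
      = eChar (y.t * y.n * w.m) * eChar (x.t * x.n * ((y.m + w.m : ℤ) : ℝ)) := by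
    -- the two total phases differ by the integer `k₁n₂m₃`
    have h : y.t * y.n * w.m + x.t * x.n * ((y.m + w.m : ℤ) : ℝ)
        = (x.t * x.n * y.m + x.t * ((x.n + y.n : ℤ) : ℝ) * w.m)
          + ((x.k * y.n * w.m : ℤ) : ℝ) := by
      rw [ht]
      push_cast
      ring
    rw [← eChar_add, ← eChar_add, h, eChar_add _ ((x.k * y.n * w.m : ℤ) : ℝ),
      eChar_intCast, mul_one]
  refine ⟨⟨?_, ?_, ?_⟩, ⟨hr, hs, ht⟩, ?_⟩
  · simp only [TripleCupPt.prod, hr', hr]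
    push_cast
    ring
  · simp only [TripleCupPt.prod, hs', hs]
    push_cast
    ring
  · simp only [TripleCupPt.prod, ht', ht]
    push_cast
    ring
  · simp only [TripleCupPt.prod, TripleCupPt.mk.injEq, add_assoc, true_and]
    calc x.z * y.z * eChar (x.t * x.n * y.m) * w.z
          * eChar (x.t * ((x.n + y.n : ℤ) : ℝ) * w.m)
        = x.z * y.z * w.z * (eChar (x.t * x.n * y.m)
          * eChar (x.t * ((x.n + y.n : ℤ) : ℝ) * w.m)) := by
          simp only [mul_assoc, mul_left_comm, mul_comm]
      _ = _ := by
          rw [key]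
          simp only [mul_assoc]
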